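/- On the Hilbert space ℓ² of square-summable complex sequences indexed by the positive integers, with orthonormal basis (ε_k)_{k≥1}, define for each integer n ≥ 1 the bounded operator μₙ by μₙ ε_k = ε_{nk}, and for each rational r the operator e(r) by e(r) ε_k = exp(2πi k r) ε_k. Then these operators satisfy the defining relations of the Bost–Connes algebra: μₙ* μₙ = 1 for all n ≥ 1; μ_k μ_n = μ_{kn} for all k, n ≥ 1; e(0) = 1, e(r)* = e(−r), e(r)e(s) = e(r+s), and e(r) depends only on r mod ℤ; and for all n ≥ 1 and all r ∈ ℚ, μₙ e(r) μₙ* = (1/n) Σ_{j=0}^{n−1} e((r+j)/n). -/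

import Mathlib

set_option synthInstance.maxHeartbeats 1000000
set_option maxHeartbeats 1000000

open scoped ENNReal

/-- The Hilbert space `ℓ²` of square-summable complex sequences indexed by the positive
integers. -/
noncomputable abbrev BCHilbert := lp (fun _ : ℕ+ => ℂ) 2

theorem bc_ext (A B : BCHilbert →L[ℂ] BCHilbert)
    (h : ∀ k : ℕ+, A (lp.single 2 k (1 : ℂ)) = B (lp.single 2 k (1 : ℂ))) : A = B := by
  ext1 f
  have hs := lp.hasSum_single (p := 2) (by norm_num) f
  have hA := hs.mapL A
  have hB := hs.mapL B
  have key : (fun k => A (lp.single 2 k (f k))) = fun k => B (lp.single 2 k (f k)) := by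
    funext k
    have : (lp.single 2 k (f k) : BCHilbert) = f k • lp.single 2 k (1 : ℂ) := by
      rw [← lp.single_smul]; simp
    rw [this, map_smul, map_smul, h]
  rw [key] at hA
  exact hA.unique hB

theorem bc_coord (f : BCHilbert) (k : ℕ+) :
    inner ℂ (lp.single 2 k (1 : ℂ) : BCHilbert) f = f k := by
  rw [lp.inner_single_left]; simp

theorem bc_vec_ext (f g : BCHilbert)
    (h : ∀ k : ℕ+, inner ℂ (lp.single 2 k (1 : ℂ) : BCHilbert) f
      = inner ℂ (lp.single 2 k (1 : ℂ) : BCHilbert) g) : f = g := by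
  apply lp.ext
  funext k
  have := h k
  rwa [bc_coord, bc_coord] at this

theorem bc_inner (k m : ℕ+) :
    inner ℂ (lp.single 2 k (1 : ℂ) : BCHilbert) (lp.single 2 m (1 : ℂ) : BCHilbert)
      = if k = m then 1 else 0 := by
  rw [bc_coord, lp.single_apply]
  simp [Pi.single_apply]

theorem bc_sum (n m : ℕ) (hn : 0 < n) (h : ¬ n ∣ m) (r : ℚ) :
    ∑ j ∈ Finset.range n, Complex.exp (2 * Real.pi * Complex.I * m * (((r + j) / n : ℚ) : ℂ)) = 0 := by
  have hn0 : (n : ℂ) ≠ 0 := by exact_mod_cast hn.ne'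
  set ζ := Complex.exp (2 * Real.pi * Complex.I * m / n) with hζ
  have h1 : ∀ j ∈ Finset.range n,
      Complex.exp (2 * Real.pi * Complex.I * m * (((r + j) / n : ℚ) : ℂ))
      = Complex.exp (2 * Real.pi * Complex.I * m * r / n) * ζ ^ j := by
    intro j _
    rw [hζ, ← Complex.exp_nat_mul, ← Complex.exp_add]
    congr 1
    push_cast
    field_simp
  rw [Finset.sum_congr rfl h1, ← Finset.mul_sum]
  have hz1 : ζ ≠ 1 := by
    intro hz
    rw [hζ, Complex.exp_eq_one_iff] at hz
    obtain ⟨t, ht⟩ := hz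
    apply h
    have h2 : (2 * Real.pi * Complex.I : ℂ) ≠ 0 := Complex.two_pi_I_ne_zero
    have h3 : (m : ℂ) = t * n := by
      rw [div_eq_iff hn0] at ht
      apply mul_left_cancel₀ h2
      rw [ht]; ring
    have h4 : (m : ℤ) = t * n := by exact_mod_cast h3
    have : (n : ℤ) ∣ m := ⟨t, by rw [h4]; ring⟩
    exact_mod_cast this
  have hzn : ζ ^ n = 1 := by
    rw [hζ, ← Complex.exp_nat_mul, Complex.exp_eq_one_iff]
    exact ⟨m, by push_cast; field_simp⟩
  rw [geom_sum_eq hz1, hzn]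
  simp

/-- the operators `μₙ ε_k = ε_{nk}` and `e(r) ε_k = exp(2πikr) ε_k` on `ℓ²`
satisfy the defining relations of the Bost–Connes algebra. -/
theorem stmt14 (μ : ℕ+ → BCHilbert →L[ℂ] BCHilbert) (e : ℚ → BCHilbert →L[ℂ] BCHilbert)
    (hμ : ∀ n k : ℕ+, μ n (lp.single 2 k (1 : ℂ)) = lp.single 2 (n * k) (1 : ℂ))
    (he : ∀ (r : ℚ) (k : ℕ+),
      e r (lp.single 2 k (1 : ℂ)) =
        Complex.exp (2 * Real.pi * Complex.I * (k : ℕ) * (r : ℚ)) • lp.single 2 k (1 : ℂ)) :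
    (∀ n : ℕ+, ContinuousLinearMap.adjoint (μ n) * μ n = 1) ∧
    (∀ k n : ℕ+, μ k * μ n = μ (k * n)) ∧
    e 0 = 1 ∧
    (∀ r : ℚ, ContinuousLinearMap.adjoint (e r) = e (-r)) ∧
    (∀ r s : ℚ, e r * e s = e (r + s)) ∧
    (∀ (r : ℚ) (m : ℤ), e (r + m) = e r) ∧
    (∀ (n : ℕ+) (r : ℚ),
      μ n * e r * ContinuousLinearMap.adjoint (μ n) =
        (((n : ℕ) : ℂ))⁻¹ • ∑ j ∈ Finset.range (n : ℕ), e ((r + j) / (n : ℕ))) := by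
  have hiso : ∀ n : ℕ+, ContinuousLinearMap.adjoint (μ n) * μ n = 1 := by
    intro n
    apply bc_ext
    intro k
    apply bc_vec_ext
    intro l
    rw [ContinuousLinearMap.mul_apply, ContinuousLinearMap.adjoint_inner_right, hμ, hμ,
      ContinuousLinearMap.one_apply, bc_inner, bc_inner]
    simp
  refine ⟨hiso, ?_, ?_, ?_, ?_, ?_, ?_⟩
  · intro k n
    apply bc_ext
    intro l
    rw [ContinuousLinearMap.mul_apply, hμ, hμ, hμ, mul_assoc]
  · apply bc_ext
    intro k
    rw [he]
    simp
  · intro r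
    apply bc_ext
    intro k
    apply bc_vec_ext
    intro l
    rw [ContinuousLinearMap.adjoint_inner_right, he, he, inner_smul_left, inner_smul_right,
      bc_inner]
    split_ifs with hlk
    · subst hlk
      have h2 : (starRingEnd ℂ) 2 = 2 := Complex.conj_ofNat 2
      rw [← Complex.exp_conj]
      simp [h2]
    · simp
  · intro r s
    apply bc_ext
    intro k
    rw [ContinuousLinearMap.mul_apply, he, map_smul, he, he, smul_smul, ← Complex.exp_add]
    congr 2
    push_cast
    ring
  · intro r m
    apply bc_ext
    intro k
    rw [he, he]
    congr 1
    rw [Complex.exp_eq_exp_iff_exists_int]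
    exact ⟨k * m, by push_cast; ring⟩
  · intro n r
    have hn0 : ((n : ℕ) : ℂ) ≠ 0 := by exact_mod_cast n.ne_zero
    apply bc_ext
    intro m
    have hR : ((((n : ℕ) : ℂ))⁻¹ • ∑ j ∈ Finset.range (n : ℕ), e ((r + j) / (n : ℕ)))
        (lp.single 2 m (1 : ℂ)) = ((((n : ℕ) : ℂ))⁻¹ * ∑ j ∈ Finset.range (n : ℕ),
          Complex.exp (2 * Real.pi * Complex.I * (m : ℕ) * (((r + j) / (n : ℕ) : ℚ) : ℂ))) •
          (lp.single 2 m (1 : ℂ) : BCHilbert) := by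
      rw [ContinuousLinearMap.smul_apply, ContinuousLinearMap.sum_apply, mul_smul,
        Finset.sum_smul]
      congr 1
      exact Finset.sum_congr rfl fun j _ => he _ _
    rw [hR, ContinuousLinearMap.mul_apply, ContinuousLinearMap.mul_apply]
    by_cases hd : (n : ℕ) ∣ (m : ℕ)
    · obtain ⟨k, rfl⟩ := PNat.dvd_iff.mpr hd
      have h1 : ContinuousLinearMap.adjoint (μ n) (lp.single 2 (n * k) (1 : ℂ))
          = lp.single 2 k (1 : ℂ) := by
        rw [← hμ, ← ContinuousLinearMap.mul_apply, hiso, ContinuousLinearMap.one_apply]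
      rw [h1, he, map_smul, hμ]
      congr 1
      have h2 : ∀ j ∈ Finset.range (n : ℕ),
          Complex.exp (2 * Real.pi * Complex.I * ((n * k : ℕ+) : ℕ) *
            (((r + j) / (n : ℕ) : ℚ) : ℂ))
          = Complex.exp (2 * Real.pi * Complex.I * (k : ℕ) * (r : ℚ)) := by
        intro j _
        rw [Complex.exp_eq_exp_iff_exists_int]
        refine ⟨k * j, ?_⟩
        push_cast
        field_simp
      rw [Finset.sum_congr rfl h2]
      simp [hn0]
    · rw [bc_sum n m n.pos hd r]
      have h1 : ContinuousLinearMap.adjoint (μ n) (lp.single 2 m (1 : ℂ)) = 0 := by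
        apply bc_vec_ext
        intro l
        rw [ContinuousLinearMap.adjoint_inner_right, hμ, bc_inner, inner_zero_right, if_neg]
        rintro rfl
        exact hd ⟨l, by simp⟩
      rw [h1]
      simp
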